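/- Let H_0, H_1, ..., H_{n-1} be real Hilbert spaces, set H_n = H_0, let G_i : H_0 -> H_i be bounded linear for i = 1, ..., n-1, with G_n the identity. For each i = 1, ..., n let A_i be a maximal monotone set-valued operator on H_i, and let B_i : H_i -> H_i be defined on all of H_i and either L_i^{-1}-cocoercive with L_i > 0, or constant. Set T_i = A_i + B_i. Then the extended solution set S = {(z, w_1, ..., w_{n-1}) : w_i in T_i(G_i z) for i = 1, ..., n-1 and -sum_{i=1}^{n-1} G_i^* w_i in T_n(z)} is a closed and convex subset of H_0 x H_1 x ... x H_{n-1}. -/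

import Mathlib

open scoped InnerProductSpace

/-!
Closedness holds because the graph of `Tᵢ = Aᵢ + Bᵢ` is closed and `S` is cut out by pulling these
graphs back along continuous maps. For convexity, take two points of `S` with differences `z` and
`w`. The definition of the adjoint gives `∑ᵢ ⟪wᵢ, Gᵢ z⟫ + ⟪-∑ᵢ Gᵢ* wᵢ, z⟫ = 0`, and monotonicity of
the `Tᵢ` makes every term nonnegative, so every term vanishes. Now if two points of the graph of a
maximal monotone operator make the monotonicity inequality an equality, the graph contains the
segment between them, since its points are monotonically related to the whole graph. This applies
to `Aᵢ` and to `Bᵢ` (continuous and monotone, hence maximal monotone), and the two segments add up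
to one in the graph of `Tᵢ`; so `Aᵢ + Bᵢ` need not be shown to be maximal.
-/

/-- The sum `A + B` of a set-valued operator and an everywhere defined single-valued one. -/
def operatorSum {E : Type*} [Add E] (A : E → Set E) (B : E → E) (x : E) : Set E :=
  {u | ∃ a ∈ A x, u = a + B x}

theorem mem_operatorSum_iff_sub_mem {E : Type*} [AddGroup E] {A : E → Set E} {B : E → E}
    {x u : E} : u ∈ operatorSum A B x ↔ u - B x ∈ A x := by
  constructor
  · rintro ⟨a, ha, rfl⟩
    rwa [add_sub_cancel_right]
  · exact fun h => ⟨u - B x, h, (sub_add_cancel u (B x)).symm⟩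

section Operators

variable {E : Type*} [NormedAddCommGroup E] [InnerProductSpace ℝ E]

/-- Monotonicity of a set-valued operator, encoded as a map into sets. -/
def IsMonotoneOperator (T : E → Set E) : Prop :=
  ∀ x y u v, u ∈ T x → v ∈ T y → 0 ≤ ⟪u - v, x - y⟫_ℝ

/-- Maximal monotonicity of a set-valued operator. Maximality of the graph is expressed pointwise:
a pair monotonically related to every point of the graph belongs to the graph. -/
structure IsMaximalMonotone (T : E → Set E) : Prop where
  monotone : IsMonotoneOperator T
  maximal : ∀ x u, (∀ y v, v ∈ T y → 0 ≤ ⟪u - v, x - y⟫_ℝ) → u ∈ T x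

/-- The graph of `T` contains the segment between any two of its points at which the monotonicity
inequality is an equality. This is the part of maximality that convexity of the extended solution
set rests on; unlike maximality itself, it passes to sums by a direct computation. -/
def IsConvexOnFlats (T : E → Set E) : Prop :=
  ∀ ⦃x y u v⦄, u ∈ T x → v ∈ T y → ⟪u - v, x - y⟫_ℝ = 0 →
    ∀ ⦃s t : ℝ⦄, 0 ≤ s → 0 ≤ t → s + t = 1 → s • u + t • v ∈ T (s • x + t • y)

/-- Monotonicity of an everywhere defined single-valued operator. -/
def IsMonotoneMap (B : E → E) : Prop :=
  ∀ x y, 0 ≤ ⟪B x - B y, x - y⟫_ℝ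

/-- `β`-cocoercivity of an everywhere defined single-valued operator. -/
def IsCocoercive (β : ℝ) (B : E → E) : Prop :=
  ∀ x y, β * ‖B x - B y‖ ^ 2 ≤ ⟪B x - B y, x - y⟫_ℝ

theorem IsCocoercive.isMonotoneMap {β : ℝ} {B : E → E} (hB : IsCocoercive β B) (hβ : 0 ≤ β) :
    IsMonotoneMap B :=
  fun x y => (by positivity : 0 ≤ β * ‖B x - B y‖ ^ 2).trans (hB x y)

theorem IsCocoercive.norm_sub_le {β : ℝ} {B : E → E} (hB : IsCocoercive β B) (hβ : 0 < β)
    (x y : E) : ‖B x - B y‖ ≤ β⁻¹ * ‖x - y‖ := by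
  rw [le_inv_mul_iff₀ hβ]
  rcases (norm_nonneg (B x - B y)).eq_or_lt with h | hpos
  · simp [← h]
  · refine le_of_mul_le_mul_right ?_ hpos
    calc β * ‖B x - B y‖ * ‖B x - B y‖ = β * ‖B x - B y‖ ^ 2 := by ring
      _ ≤ ⟪B x - B y, x - y⟫_ℝ := hB x y
      _ ≤ ‖B x - B y‖ * ‖x - y‖ := real_inner_le_norm _ _
      _ = ‖x - y‖ * ‖B x - B y‖ := mul_comm _ _

theorem IsCocoercive.continuous {β : ℝ} {B : E → E} (hB : IsCocoercive β B) (hβ : 0 < β) :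
    Continuous B := by
  refine (LipschitzWith.of_dist_le' (K := β⁻¹) fun x y => ?_).continuous
  simpa only [dist_eq_norm] using hB.norm_sub_le hβ x y

theorem continuous_and_isMonotoneMap_of_isCocoercive_or_const {B : E → E}
    (hB : (∃ L : ℝ, 0 < L ∧ IsCocoercive (1 / L) B) ∨ ∃ v, ∀ x, B x = v) :
    Continuous B ∧ IsMonotoneMap B := by
  rcases hB with ⟨L, hL, hB⟩ | ⟨v, hv⟩
  · exact ⟨hB.continuous (one_div_pos.2 hL), hB.isMonotoneMap (one_div_pos.2 hL).le⟩
  · obtain rfl : B = fun _ => v := funext hv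
    exact ⟨continuous_const, fun x y => by simp⟩

theorem IsMaximalMonotone.isClosed_graph {T : E → Set E} (hT : IsMaximalMonotone T) :
    IsClosed {p : E × E | p.2 ∈ T p.1} := by
  have graph_eq : {p : E × E | p.2 ∈ T p.1} =
      ⋂ (y) (v) (_ : v ∈ T y), {p : E × E | 0 ≤ ⟪p.2 - v, p.1 - y⟫_ℝ} := by
    ext ⟨x, u⟩
    simp only [Set.mem_iInter]
    exact ⟨fun hu y v => hT.monotone x y u v hu, hT.maximal x u⟩
  rw [graph_eq]
  exact isClosed_iInter fun y => isClosed_iInter fun v => isClosed_iInter fun _ =>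
    isClosed_le continuous_const (by fun_prop)

theorem inner_convexCombination_sub_convexCombination_sub {s t : ℝ} (hst : s + t = 1)
    (x y z u v w : E) :
    ⟪s • u + t • v - w, s • x + t • y - z⟫_ℝ =
      s * ⟪u - w, x - z⟫_ℝ + t * ⟪v - w, y - z⟫_ℝ - s * t * ⟪u - v, x - y⟫_ℝ := by
  obtain rfl : s = 1 - t := by linarith
  simp only [inner_sub_left, inner_sub_right, inner_add_left, inner_add_right,
    real_inner_smul_left, real_inner_smul_right]
  ring

theorem IsMaximalMonotone.isConvexOnFlats {T : E → Set E} (hT : IsMaximalMonotone T) :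
    IsConvexOnFlats T := by
  intro x y u v hu hv hflat s t hs ht hst
  refine hT.maximal _ _ fun z w hw => ?_
  rw [inner_convexCombination_sub_convexCombination_sub hst, hflat, mul_zero, sub_zero]
  exact add_nonneg (mul_nonneg hs (hT.monotone x z u w hu hw))
    (mul_nonneg ht (hT.monotone y z v w hv hw))

-- Minty's trick: test against `x + τ • h` with `h = u - B x`, divide by `τ > 0`, and let `τ → 0`.
theorem eq_of_forall_inner_sub_nonneg_of_continuous {B : E → E} (hB : Continuous B) {x u : E}
    (hu : ∀ y, 0 ≤ ⟪u - B y, x - y⟫_ℝ) : u = B x := by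
  set h := u - B x with h_def
  have inner_nonpos : ∀ τ > (0 : ℝ), ⟪u - B (x + τ • h), h⟫_ℝ ≤ 0 := by
    intro τ hτ
    have := hu (x + τ • h)
    rw [sub_add_cancel_left, inner_neg_right, real_inner_smul_right] at this
    exact nonpos_of_mul_nonpos_right (neg_nonneg.1 this) hτ
  have tendsto_inner : Filter.Tendsto (fun τ : ℝ => ⟪u - B (x + τ • h), h⟫_ℝ)
      (nhdsWithin 0 (Set.Ioi 0)) (nhds ⟪h, h⟫_ℝ) := by
    have cont : Continuous fun τ : ℝ => ⟪u - B (x + τ • h), h⟫_ℝ := by fun_prop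
    simpa [← h_def] using (cont.tendsto 0).mono_left nhdsWithin_le_nhds
  have inner_self_nonpos : ⟪h, h⟫_ℝ ≤ 0 :=
    le_of_tendsto tendsto_inner (eventually_mem_nhdsWithin.mono inner_nonpos)
  exact sub_eq_zero.1 (real_inner_self_nonpos.1 inner_self_nonpos)

theorem IsMonotoneMap.isMaximalMonotone_singleton {B : E → E} (hB : IsMonotoneMap B)
    (hBc : Continuous B) : IsMaximalMonotone fun x => {B x} where
  monotone := by
    rintro x y _ _ rfl rfl
    exact hB x y
  maximal _ _ hu := eq_of_forall_inner_sub_nonneg_of_continuous hBc fun y => hu y (B y) rfl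

theorem IsMonotoneOperator.operatorSum {A : E → Set E} {B : E → E} (hA : IsMonotoneOperator A)
    (hB : IsMonotoneMap B) : IsMonotoneOperator (operatorSum A B) := by
  rintro x y _ _ ⟨a, ha, rfl⟩ ⟨b, hb, rfl⟩
  rw [add_sub_add_comm, inner_add_left]
  exact add_nonneg (hA x y a b ha hb) (hB x y)

theorem IsMaximalMonotone.isConvexOnFlats_operatorSum {A : E → Set E} {B : E → E}
    (hA : IsMaximalMonotone A) (hB : IsMonotoneMap B) (hBc : Continuous B) :
    IsConvexOnFlats (operatorSum A B) := by
  rintro x y _ _ ⟨a, ha, rfl⟩ ⟨b, hb, rfl⟩ hflat s t hs ht hst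
  rw [add_sub_add_comm, inner_add_left] at hflat
  obtain ⟨flatA, flatB⟩ :=
    (add_eq_zero_iff_of_nonneg (hA.monotone x y a b ha hb) (hB x y)).1 hflat
  have mem_A := hA.isConvexOnFlats ha hb flatA hs ht hst
  have B_eq : s • B x + t • B y = B (s • x + t • y) :=
    (hB.isMaximalMonotone_singleton hBc).isConvexOnFlats rfl rfl flatB hs ht hst
  refine ⟨s • a + t • b, mem_A, ?_⟩
  rw [← B_eq]
  module

theorem IsMaximalMonotone.isClosed_graph_operatorSum {A : E → Set E} {B : E → E}
    (hA : IsMaximalMonotone A) (hBc : Continuous B) :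
    IsClosed {p : E × E | p.2 ∈ operatorSum A B p.1} := by
  simp only [mem_operatorSum_iff_sub_mem]
  exact hA.isClosed_graph.preimage (f := fun p : E × E => (p.1, p.2 - B p.1)) (by fun_prop)

end Operators

section ExtendedSolutionSet

variable {H0 : Type*} [NormedAddCommGroup H0] [InnerProductSpace ℝ H0] [CompleteSpace H0]
  {ι : Type*} [Fintype ι] {H : ι → Type*} [∀ i, NormedAddCommGroup (H i)]
  [∀ i, InnerProductSpace ℝ (H i)] [∀ i, CompleteSpace (H i)]

/-- The continuous linear map `w ↦ -∑ᵢ Gᵢ* wᵢ`, giving the dual variable of the last operator `Tₙ`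
in terms of the others. -/
noncomputable def lastDual (G : ∀ i, H0 →L[ℝ] H i) : (∀ i, H i) →L[ℝ] H0 where
  toFun w := -∑ i, ContinuousLinearMap.adjoint (G i) (w i)
  map_add' w w' := by
    simp only [Pi.add_apply, map_add, Finset.sum_add_distrib, neg_add]
  map_smul' c w := by
    simp only [Pi.smul_apply, map_smul, Finset.smul_sum, smul_neg, RingHom.id_apply]

/-- The extended solution set `S` of a family of set-valued operators `Tᵢ` on `Hᵢ`, composed with
`Gᵢ`, and one further operator `Tₙ` on `H₀`. -/
def extendedSolutionSet (G : ∀ i, H0 →L[ℝ] H i) (T : ∀ i, H i → Set (H i)) (Tn : H0 → Set H0) :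
    Set (H0 × ∀ i, H i) :=
  {p | (∀ i, p.2 i ∈ T i (G i p.1)) ∧ lastDual G p.2 ∈ Tn p.1}

theorem sum_inner_add_inner_lastDual (G : ∀ i, H0 →L[ℝ] H i) (z : H0) (w : ∀ i, H i) :
    ∑ i, ⟪w i, G i z⟫_ℝ + ⟪lastDual G w, z⟫_ℝ = 0 := by
  have inner_lastDual : ⟪lastDual G w, z⟫_ℝ = -∑ i, ⟪w i, G i z⟫_ℝ := by
    simp [lastDual, inner_neg_left, sum_inner, ContinuousLinearMap.adjoint_inner_left]
  rw [inner_lastDual, add_neg_cancel]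

theorem isClosed_extendedSolutionSet (G : ∀ i, H0 →L[ℝ] H i) {T : ∀ i, H i → Set (H i)}
    {Tn : H0 → Set H0} (hT : ∀ i, IsClosed {p : H i × H i | p.2 ∈ T i p.1})
    (hTn : IsClosed {p : H0 × H0 | p.2 ∈ Tn p.1}) :
    IsClosed (extendedSolutionSet G T Tn) := by
  rw [extendedSolutionSet, Set.ofPred_and, Set.ofPred_forall]
  refine (isClosed_iInter fun i => ?_).inter ?_
  · exact (hT i).preimage (f := fun p : H0 × ∀ i, H i => (G i p.1, p.2 i)) (by fun_prop)
  · exact hTn.preimage (f := fun p : H0 × ∀ i, H i => (p.1, lastDual G p.2)) (by fun_prop)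

theorem inner_eq_zero_of_mem_extendedSolutionSet (G : ∀ i, H0 →L[ℝ] H i)
    {T : ∀ i, H i → Set (H i)} {Tn : H0 → Set H0} (hT : ∀ i, IsMonotoneOperator (T i))
    (hTn : IsMonotoneOperator Tn) {p q : H0 × ∀ i, H i} (hp : p ∈ extendedSolutionSet G T Tn)
    (hq : q ∈ extendedSolutionSet G T Tn) :
    (∀ i, ⟪p.2 i - q.2 i, G i p.1 - G i q.1⟫_ℝ = 0) ∧
      ⟪lastDual G p.2 - lastDual G q.2, p.1 - q.1⟫_ℝ = 0 := by
  have term_nonneg i : 0 ≤ ⟪p.2 i - q.2 i, G i p.1 - G i q.1⟫_ℝ :=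
    hT i _ _ _ _ (hp.1 i) (hq.1 i)
  have last_nonneg : 0 ≤ ⟪lastDual G p.2 - lastDual G q.2, p.1 - q.1⟫_ℝ :=
    hTn _ _ _ _ hp.2 hq.2
  have sum_nonneg := Finset.sum_nonneg fun i (_ : i ∈ Finset.univ) => term_nonneg i
  have total_eq_zero := sum_inner_add_inner_lastDual G (p.1 - q.1) (p.2 - q.2)
  simp only [Pi.sub_apply, map_sub] at total_eq_zero
  obtain ⟨sum_eq_zero, last_eq_zero⟩ :=
    (add_eq_zero_iff_of_nonneg sum_nonneg last_nonneg).1 total_eq_zero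
  exact ⟨fun i => (Finset.sum_eq_zero_iff_of_nonneg fun i _ => term_nonneg i).1 sum_eq_zero i
    (Finset.mem_univ i), last_eq_zero⟩

theorem convex_extendedSolutionSet (G : ∀ i, H0 →L[ℝ] H i) {T : ∀ i, H i → Set (H i)}
    {Tn : H0 → Set H0} (hT : ∀ i, IsMonotoneOperator (T i)) (hTn : IsMonotoneOperator Tn)
    (hTflat : ∀ i, IsConvexOnFlats (T i)) (hTnflat : IsConvexOnFlats Tn) :
    Convex ℝ (extendedSolutionSet G T Tn) := by
  intro p hp q hq s t hs ht hst
  obtain ⟨inner_eq_zero, inner_last_eq_zero⟩ :=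
    inner_eq_zero_of_mem_extendedSolutionSet G hT hTn hp hq
  constructor
  · intro i
    simpa using hTflat i (hp.1 i) (hq.1 i) (inner_eq_zero i) hs ht hst
  · simpa using hTnflat hp.2 hq.2 inner_last_eq_zero hs ht hst

theorem extended_solution_set_closed_convex_general (G : ∀ i, H0 →L[ℝ] H i)
    {A : ∀ i, H i → Set (H i)} {An : H0 → Set H0} {B : ∀ i, H i → H i} {Bn : H0 → H0}
    (hA : ∀ i, IsMaximalMonotone (A i)) (hAn : IsMaximalMonotone An)
    (hB : ∀ i, Continuous (B i) ∧ IsMonotoneMap (B i))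
    (hBn : Continuous Bn ∧ IsMonotoneMap Bn) :
    IsClosed (extendedSolutionSet G (fun i => operatorSum (A i) (B i)) (operatorSum An Bn)) ∧
      Convex ℝ (extendedSolutionSet G (fun i => operatorSum (A i) (B i)) (operatorSum An Bn)) :=
  ⟨isClosed_extendedSolutionSet G (fun i => (hA i).isClosed_graph_operatorSum (hB i).1)
      (hAn.isClosed_graph_operatorSum hBn.1),
    convex_extendedSolutionSet G (fun i => (hA i).monotone.operatorSum (hB i).2)
      (hAn.monotone.operatorSum hBn.2)
      (fun i => (hA i).isConvexOnFlats_operatorSum (hB i).2 (hB i).1)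
      (hAn.isConvexOnFlats_operatorSum hBn.2 hBn.1)⟩

end ExtendedSolutionSet

/-- with `Tᵢ = Aᵢ + Bᵢ` where each `Aᵢ` is maximal monotone and each `Bᵢ` is
everywhere defined and either `Lᵢ⁻¹`-cocoercive (`Lᵢ > 0`) or constant, the extended
solution set
`S = {(z, w) : wᵢ ∈ Tᵢ(Gᵢ z) for i = 1, …, n-1, and -∑ᵢ Gᵢ* wᵢ ∈ T_n(z)}`
is a closed convex subset of the product space `H₀ × H₁ × ⋯ × H_{n-1}`. -/
theorem extended_solution_set_closed_convex
    {H0 : Type*} [NormedAddCommGroup H0] [InnerProductSpace ℝ H0] [CompleteSpace H0]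
    {m : ℕ} {H : Fin m → Type*} [∀ i, NormedAddCommGroup (H i)]
    [∀ i, InnerProductSpace ℝ (H i)] [∀ i, CompleteSpace (H i)]
    (G : ∀ i, H0 →L[ℝ] H i)
    (A : ∀ i, H i → Set (H i)) (An : H0 → Set H0)
    (B : ∀ i, H i → H i) (Bn : H0 → H0)
    -- each Aᵢ is monotone
    (hAmono : ∀ i, ∀ x y a b, a ∈ A i x → b ∈ A i y → 0 ≤ ⟪a - b, x - y⟫_ℝ)
    (hAnmono : ∀ x y a b, a ∈ An x → b ∈ An y → 0 ≤ ⟪a - b, x - y⟫_ℝ)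
    -- each Aᵢ is maximal: any point monotonically related to the graph lies in the graph
    (hAmax : ∀ i, ∀ x u, (∀ y v, v ∈ A i y → 0 ≤ ⟪u - v, x - y⟫_ℝ) → u ∈ A i x)
    (hAnmax : ∀ x u, (∀ y v, v ∈ An y → 0 ≤ ⟪u - v, x - y⟫_ℝ) → u ∈ An x)
    -- each Bᵢ is either Lᵢ⁻¹-cocoercive with Lᵢ > 0, or constant
    (hB : ∀ i, (∃ L : ℝ, 0 < L ∧
            ∀ x y, (1/L) * ‖B i x - B i y‖^2 ≤ ⟪B i x - B i y, x - y⟫_ℝ)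
          ∨ (∃ v, ∀ x, B i x = v))
    (hBn : (∃ L : ℝ, 0 < L ∧
            ∀ x y, (1/L) * ‖Bn x - Bn y‖^2 ≤ ⟪Bn x - Bn y, x - y⟫_ℝ)
          ∨ (∃ v, ∀ x, Bn x = v)) :
    IsClosed {p : H0 × (∀ i, H i) |
        (∀ i, ∃ a ∈ A i (G i p.1), p.2 i = a + B i (G i p.1)) ∧
        (∃ a ∈ An p.1,
          -∑ i, ContinuousLinearMap.adjoint (G i) (p.2 i) = a + Bn p.1)} ∧
    Convex ℝ {p : H0 × (∀ i, H i) |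
        (∀ i, ∃ a ∈ A i (G i p.1), p.2 i = a + B i (G i p.1)) ∧
        (∃ a ∈ An p.1,
          -∑ i, ContinuousLinearMap.adjoint (G i) (p.2 i) = a + Bn p.1)} :=
  extended_solution_set_closed_convex_general G (fun i => ⟨hAmono i, hAmax i⟩) ⟨hAnmono, hAnmax⟩
    (fun i => continuous_and_isMonotoneMap_of_isCocoercive_or_const (hB i))
    (continuous_and_isMonotoneMap_of_isCocoercive_or_const hBn)
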